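/- Let G be a P4-sparse graph and let A be a set of four vertices inducing a P4 in G. Then there do not exist a vertex v in I(A) ∪ P(A) and distinct vertices x, y in T(A) such that the only edge of G among {v, x, y} is vx. -/

import Mathlib

open SimpleGraph

variable {V : Type*}

/-- `a, b, c, d` form an induced path on four vertices (a `P4`) in `G`. -/
def IsP4 (G : SimpleGraph V) (a b c d : V) : Prop :=
  a ≠ b ∧ a ≠ c ∧ a ≠ d ∧ b ≠ c ∧ b ≠ d ∧ c ≠ d ∧
    G.Adj a b ∧ G.Adj b c ∧ G.Adj c d ∧ ¬G.Adj a c ∧ ¬G.Adj a d ∧ ¬G.Adj b d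

/-- A graph is a cograph if it contains no induced `P4`. -/
def IsCograph (G : SimpleGraph V) : Prop :=
  ∀ a b c d : V, ¬IsP4 G a b c d

/-- The vertex set `A` induces a `P4` in `G`. -/
def InducesP4 (G : SimpleGraph V) (A : Set V) : Prop :=
  ∃ a b c d : V, IsP4 G a b c d ∧ A = {a, b, c, d}

/-- `G` is `P4`-sparse: every set of five vertices induces at most one `P4`. -/
def P4Sparse (G : SimpleGraph V) : Prop :=
  ∀ s : Set V, s.ncard = 5 →
    ∀ A B : Set V, A ⊆ s → B ⊆ s → InducesP4 G A → InducesP4 G B → A = B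

/-- `F` is a deletion set of `G`: a set of edges of `G` whose removal yields a cograph. -/
def IsDeletionSet (G : SimpleGraph V) (F : Set (Sym2 V)) : Prop :=
  F ⊆ G.edgeSet ∧ IsCograph (G.deleteEdges F)

/-- The minimum size of a deletion set of `G`. -/
noncomputable def cographAlpha (G : SimpleGraph V) : ℕ :=
  sInf {n | ∃ F : Set (Sym2 V), IsDeletionSet G F ∧ F.ncard = n}

/-- `T(A)`: the vertices outside `A` adjacent to all vertices of `A`. -/
def tSet (G : SimpleGraph V) (A : Set V) : Set V :=
  {v | v ∉ A ∧ ∀ a ∈ A, G.Adj v a}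

/-- `I(A)`: the vertices outside `A` adjacent to no vertex of `A`. -/
def iSet (G : SimpleGraph V) (A : Set V) : Set V :=
  {v | v ∉ A ∧ ∀ a ∈ A, ¬G.Adj v a}

/-- `P(A)`: the vertices `v` outside `A` with `1 ≤ |N(v) ∩ A| ≤ 3`. -/
def pSet (G : SimpleGraph V) (A : Set V) : Set V :=
  {v | v ∉ A ∧ 1 ≤ (G.neighborSet v ∩ A).ncard ∧ (G.neighborSet v ∩ A).ncard ≤ 3}

/-!
A vertex `v` of `I(A) ∪ P(A)` misses some vertex of `A`, and hence at least two, `p` and `q`: if it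
missed only one, `v` and three vertices of `A` would induce a second `P4` inside `A ∪ {v}`.
Then `v, x, p, y` and `v, x, q, y` are two `P4`s on the five vertices `v, x, y, p, q`.
-/

section

variable {G : SimpleGraph V} {a b c d p q v : V} {A B : Set V}

theorem isP4_iff_adj :
    IsP4 G a b c d ↔
      G.Adj a b ∧ G.Adj b c ∧ G.Adj c d ∧ ¬G.Adj a c ∧ ¬G.Adj a d ∧ ¬G.Adj b d := by
  refine ⟨fun ⟨_, _, _, _, _, _, hadj⟩ => hadj, fun ⟨hab, hbc, hcd, hac, had, hbd⟩ => ?_⟩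
  have hca_ne : c ≠ a := G.ne_of_adj_of_not_adj hcd had
  have hda_ne : d ≠ a := G.ne_of_adj_of_not_adj hcd.symm hac
  have hbd_ne : b ≠ d := G.ne_of_adj_of_not_adj hab.symm (mt G.adj_symm had)
  exact ⟨hab.ne, hca_ne.symm, hda_ne.symm, hbc.ne, hbd_ne, hcd.ne, hab, hbc, hcd, hac, had, hbd⟩

theorem IsP4.symm (h : IsP4 G a b c d) : IsP4 G d c b a := by
  obtain ⟨hab, hbc, hcd, hac, had, hbd⟩ := isP4_iff_adj.1 h
  exact isP4_iff_adj.2 ⟨hcd.symm, hbc.symm, hab.symm,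
    mt G.adj_symm hbd, mt G.adj_symm had, mt G.adj_symm hac⟩

theorem IsP4.inducesP4 (h : IsP4 G a b c d) : InducesP4 G {a, b, c, d} :=
  ⟨a, b, c, d, h, rfl⟩

theorem InducesP4.ncard_eq_four (hA : InducesP4 G A) : A.ncard = 4 := by
  obtain ⟨a, b, c, d, ⟨hab, hac, had, hbc, hbd, hcd, -⟩, rfl⟩ := hA
  exact Set.ncard_eq_four.2 ⟨a, b, c, d, hab, hac, had, hbc, hbd, hcd, rfl⟩

theorem not_subset_neighborSet_of_mem_iSet_union_pSet (hA : 3 < A.ncard)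
    (hv : v ∈ iSet G A ∪ pSet G A) : ¬A ⊆ G.neighborSet v := by
  intro hsub
  rcases hv with ⟨-, hnone⟩ | ⟨-, -, hle⟩
  · obtain ⟨a, ha⟩ := Set.nonempty_of_ncard_ne_zero (by omega : A.ncard ≠ 0)
    exact hnone a ha (hsub ha)
  · rw [Set.inter_eq_right.2 hsub] at hle
    omega

namespace P4Sparse

theorem eq_of_subset_insert (hG : P4Sparse G) (hA : InducesP4 G A) (hB : InducesP4 G B)
    (hsub : B ⊆ insert v A) : A = B := by
  have hfin : A.Finite := Set.finite_of_ncard_ne_zero (by simp [hA.ncard_eq_four])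
  by_cases hv : v ∈ A
  · rw [Set.insert_eq_of_mem hv] at hsub
    exact (Set.eq_of_subset_of_ncard_le hsub
      (hA.ncard_eq_four.trans hB.ncard_eq_four.symm).le hfin).symm
  · have hcard : (insert v A).ncard = 5 := by
      rw [Set.ncard_insert_of_notMem hv hfin, hA.ncard_eq_four]
    exact hG _ hcard A B (Set.subset_insert v A) hsub hA hB

theorem eq_of_isP4_of_inducesP4 (hG : P4Sparse G) (hp : IsP4 G a b p d)
    (hq : InducesP4 G {a, b, q, d}) : p = q := by
  have heq : ({a, b, p, d} : Set V) = {a, b, q, d} :=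
    hG.eq_of_subset_insert (v := q) hp.inducesP4 hq (by grind)
  obtain ⟨-, hap, -, hbp, -, hpd, -⟩ := hp
  have hmem : p ∈ ({a, b, q, d} : Set V) := heq ▸ (by simp)
  simpa [hap.symm, hbp.symm, hpd] using hmem

theorem adj_fst_of_adj (hG : P4Sparse G) (h : IsP4 G a b c d)
    (hvb : G.Adj v b) (hvc : G.Adj v c) (hvd : G.Adj v d) : G.Adj v a := by
  by_contra hva
  obtain ⟨hab, -, -, -, had, hbd⟩ := isP4_iff_adj.1 h
  have habvd : IsP4 G a b v d :=
    isP4_iff_adj.2 ⟨hab, hvb.symm, hvd, mt G.adj_symm hva, had, hbd⟩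
  exact hvc.ne' (hG.eq_of_isP4_of_inducesP4 h habvd.inducesP4)

theorem adj_snd_of_adj (hG : P4Sparse G) (h : IsP4 G a b c d)
    (hva : G.Adj v a) (hvc : G.Adj v c) (hvd : G.Adj v d) : G.Adj v b := by
  by_contra hvb
  obtain ⟨hab, -, -, -, had, hbd⟩ := isP4_iff_adj.1 h
  have hbavd : IsP4 G b a v d :=
    isP4_iff_adj.2 ⟨hab.symm, hva.symm, hvd, mt G.adj_symm hvb, hbd, had⟩
  exact hvc.ne' (hG.eq_of_isP4_of_inducesP4 h (Set.insert_comm b a {v, d} ▸ hbavd.inducesP4))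

theorem nontrivial_diff_neighborSet (hG : P4Sparse G) (hA : InducesP4 G A)
    (hv : ¬A ⊆ G.neighborSet v) : (A \ G.neighborSet v).Nontrivial := by
  obtain ⟨p, hp, hvp⟩ := Set.not_subset.1 hv
  by_contra hsub
  have hadj : ∀ q ∈ A, q ≠ p → G.Adj v q := fun q hq hqp => by
    by_contra hvq
    exact hqp (Set.not_nontrivial_iff.1 hsub ⟨hq, hvq⟩ ⟨hp, hvp⟩)
  obtain ⟨a, b, c, d, h, rfl⟩ := hA
  have ⟨hab, hac, had, hbc, hbd, hcd, _⟩ := h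
  apply hvp
  rcases hp with rfl | rfl | rfl | rfl
  · exact hG.adj_fst_of_adj h (hadj b (by simp) hab.symm) (hadj c (by simp) hac.symm)
      (hadj d (by simp) had.symm)
  · exact hG.adj_snd_of_adj h (hadj a (by simp) hab) (hadj c (by simp) hbc.symm)
      (hadj d (by simp) hbd.symm)
  · exact hG.adj_snd_of_adj h.symm (hadj d (by simp) hcd.symm) (hadj b (by simp) hbc)
      (hadj a (by simp) hac)
  · exact hG.adj_fst_of_adj h.symm (hadj c (by simp) hcd) (hadj b (by simp) hbd)
      (hadj a (by simp) had)

end P4Sparse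

end

/-- **Observation 2.4.** If `G` is `P4`-sparse and `A` induces a `P4`, then
there are no `v ∈ I(A) ∪ P(A)` and distinct `x, y ∈ T(A)` such that the only edge of `G`
among `{v, x, y}` is `vx`. -/
theorem p4Sparse_obs_2_4 (G : SimpleGraph V) (hG : P4Sparse G)
    (a b c d : V) (hP4 : IsP4 G a b c d) (A : Set V) (hA : A = {a, b, c, d}) :
    ¬∃ v x y : V, x ≠ y ∧ v ∈ iSet G A ∪ pSet G A ∧ x ∈ tSet G A ∧ y ∈ tSet G A ∧
      G.Adj v x ∧ ¬G.Adj v y ∧ ¬G.Adj x y := by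
  subst hA
  rintro ⟨v, x, y, -, hv, ⟨-, hx⟩, ⟨-, hy⟩, hvx, hvy, hxy⟩
  have hA : InducesP4 G {a, b, c, d} := hP4.inducesP4
  have hmissed : ¬{a, b, c, d} ⊆ G.neighborSet v :=
    not_subset_neighborSet_of_mem_iSet_union_pSet (by simp [hA.ncard_eq_four]) hv
  obtain ⟨p, hp, q, hq, hpq⟩ := hG.nontrivial_diff_neighborSet hA hmissed
  have hpath : ∀ r ∈ {a, b, c, d} \ G.neighborSet v, IsP4 G v x r y := fun r ⟨hr, hvr⟩ =>
    isP4_iff_adj.2 ⟨hvx, hx r hr, (hy r hr).symm, hvr, hvy, hxy⟩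
  exact hpq (hG.eq_of_isP4_of_inducesP4 (hpath p hp) (hpath q hq).inducesP4)
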